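/- Let δ be a formal vector field on Ô_n = ℂ[[x_1,...,x_n]] with δ(0) = 0 and let w = (w_1,...,w_n) ∈ ℂ^n be the eigenvalues of its linear part. Then there exists a formal change of coordinates after which δ = δ_S + δ_N, where δ_S = Σ_{i=1}^n w_i x_i ∂_{x_i} and δ_N is a formal vector field with nilpotent linear part satisfying [δ_S, δ_N] = 0. -/

import Mathlib

set_option maxHeartbeats 1000000
set_option synthInstance.maxHeartbeats 1000000

noncomputable section

/-- The ring `Ô_n = ℂ[[x₁, …, xₙ]]` of formal power series. -/
abbrev FPS (n : ℕ) : Type := MvPowerSeries (Fin n) ℂ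

/-- The `i`-th partial derivative of a formal power series. -/
def fpd {n : ℕ} (i : Fin n) (f : FPS n) : FPS n :=
  fun m => ((m i : ℂ) + 1) * MvPowerSeries.coeff (m + Finsupp.single i 1) f

/-- The action `δ(f) = Σ aᵢ ∂f/∂xᵢ` of a formal vector field `δ = Σ aᵢ ∂ᵢ`
(given by its coefficients `aᵢ ∈ Ô_n`) on a formal power series `f`. -/
def applyPS {n : ℕ} (δ : Fin n → FPS n) (f : FPS n) : FPS n := ∑ i, δ i * fpd i f

/-- The linear part `j¹δ` of a formal vector field, as the matrix `(∂δⱼ/∂xᵢ)(0)`. -/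
def linPartPS {n : ℕ} (δ : Fin n → FPS n) : Matrix (Fin n) (Fin n) ℂ :=
  Matrix.of fun i j => MvPowerSeries.coeff (Finsupp.single i 1) (δ j)

/-- The semisimple (Euler) vector field `δ_S = Σ wᵢ xᵢ ∂ᵢ` attached to weights `w`. -/
def eulerPS {n : ℕ} (w : Fin n → ℂ) : Fin n → FPS n :=
  fun j => MvPowerSeries.C (w j) * MvPowerSeries.X j

/-- `δ(0) = 0`: all coefficients of the vector field lie in the maximal ideal. -/
def VanishAt0 {n : ℕ} (δ : Fin n → FPS n) : Prop :=
  ∀ j, MvPowerSeries.constantCoeff (δ j) = 0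

/-- Vanishing of the Lie bracket `[δ, η] = 0` of two formal vector fields,
componentwise: `δ(ηⱼ) - η(δⱼ) = 0` for all `j`. -/
def CommutePS {n : ℕ} (δ η : Fin n → FPS n) : Prop :=
  ∀ j, applyPS δ (η j) = applyPS η (δ j)

open Module MvPowerSeries

/-!
Modulo the square of the maximal ideal, a generalized eigenbasis of the linear part consists of
generalized eigenvectors of `δ`. By Fitting's lemma these lift through the finite-dimensional
quotients by powers of the maximal ideal, and in the limit one gets coordinates `yᵢ` that are
`𝔪`-adic generalized eigenvectors of `δ` with eigenvalues `wᵢ`. By the Leibniz rule the monomial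
`y ^ m` is then one with eigenvalue `∑ mᵢ wᵢ`, so in these coordinates `δ` preserves the spaces of
series supported on monomials of a given weight. They are the eigenspaces of `δ_S`, so `δ` commutes
with `δ_S`. On linear terms, `δ - δ_S` acts on a generalized eigenspace of `δ` as `δ` minus the
eigenvalue, hence nilpotently.
-/

section GeneralizedEigenspaces

section CharpolySplits

variable {K V ι : Type*} [Field K] [AddCommGroup V] [Module K V] [FiniteDimensional K V]
  [Fintype ι] {T : End K V} {w : ι → K}

theorem finrank_maxGenEigenspace_eq_card [DecidableEq K]
    (hT : T.charpoly = ∏ i, (Polynomial.X - Polynomial.C (w i))) (μ : K) :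
    finrank K (T.maxGenEigenspace μ) = Fintype.card {i // w i = μ} := by
  have hroots : T.charpoly.roots = Finset.univ.val.map w := by
    rw [hT, Finset.prod_eq_multiset_prod, ← Function.comp_def (fun a => _ - Polynomial.C a) w,
      ← Multiset.map_map, Polynomial.roots_multiset_prod_X_sub_C]
  rw [LinearMap.finrank_maxGenEigenspace_eq, ← Polynomial.count_roots, hroots,
    Multiset.count_map, Fintype.card_subtype]
  simp only [eq_comm, Finset.card, Finset.filter_val]

theorem exists_basis_mem_maxGenEigenspace
    (hT : T.charpoly = ∏ i, (Polynomial.X - Polynomial.C (w i))) :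
    ∃ b : Basis ι K V, ∀ i, b i ∈ T.maxGenEigenspace (w i) := by
  classical
  let β (μ : K) : Basis {i // w i = μ} K (T.maxGenEigenspace μ) :=
    (finBasis K _).reindex (Fintype.equivOfCardEq (by
      rw [Fintype.card_fin, finrank_maxGenEigenspace_eq_card hT]))
  let v (i : ι) : V := β (w i) ⟨i, rfl⟩
  have hv : LinearIndependent K v := by
    have hinj := LinearMap.ker_eq_bot.mpr T.independent_maxGenEigenspace.dfinsupp_lsum_injective
    have hli := ((DFinsupp.basis β).linearIndependent.map' _ hinj).comp _
      (Equiv.sigmaFiberEquiv w).symm.injective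
    simpa [v, DFinsupp.basis, Equiv.sigmaFiberEquiv, Function.comp_def] using hli
  have hcard : Fintype.card ι = finrank K V := by
    rw [← T.charpoly_natDegree, hT, Polynomial.natDegree_finsetProd_X_sub_C_eq_card,
      Finset.card_univ]
  exact ⟨basisOfLinearIndependentOfCardEqFinrank' v hv hcard, fun i => by simp [v]⟩

end CharpolySplits

variable {R M N : Type*} [CommRing R] [AddCommGroup M] [Module R M] [AddCommGroup N] [Module R N]

theorem intertwine_sub_smul_pow {T : End R M} {S : End R N} {f : M →ₗ[R] N}
    (hf : f ∘ₗ T = S ∘ₗ f) (μ : R) (k : ℕ) (x : M) :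
    f (((T - μ • (1 : End R M)) ^ k) x) = ((S - μ • (1 : End R N)) ^ k) (f x) := by
  have hcomm : f ∘ₗ (T - μ • (1 : End R M)) = (S - μ • (1 : End R N)) ∘ₗ f := by
    rw [LinearMap.comp_sub, hf, LinearMap.sub_comp]
    ext y
    simp
  exact LinearMap.congr_fun (Module.End.commute_pow_left_of_commute hcomm.symm k).symm x

theorem exists_mem_maxGenEigenspace_of_surjective [IsArtinian R M] [IsNoetherian R N]
    {T : End R M} {S : End R N} {f : M →ₗ[R] N} (hsurj : Function.Surjective f)
    (hf : f ∘ₗ T = S ∘ₗ f) {μ : R} {y : N} (hy : y ∈ S.maxGenEigenspace μ) :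
    ∃ x ∈ T.maxGenEigenspace μ, f x = y := by
  -- Fitting: for large `l`, the source is spanned by the kernel and the range of `(T - μ) ^ l`,
  -- and the image of the range component meets the generalized eigenspace of `S` trivially.
  obtain ⟨k, hk⟩ := (S.mem_maxGenEigenspace μ y).mp hy
  obtain ⟨l, hT, hS, hkl⟩ := ((T - μ • 1).eventually_codisjoint_ker_pow_range_pow.and
    ((S - μ • 1).eventually_disjoint_ker_pow_range_pow.and
      (Filter.eventually_ge_atTop k))).exists
  obtain ⟨x, rfl⟩ := hsurj y
  obtain ⟨a, ha, b, ⟨c, rfl⟩, rfl⟩ := Submodule.mem_sup.mp (hT.eq_top ▸ Submodule.mem_top (x := x))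
  refine ⟨a, (T.mem_maxGenEigenspace μ a).mpr ⟨l, ha⟩, ?_⟩
  have hker : f (((T - μ • 1) ^ l) c) ∈ LinearMap.ker ((S - μ • 1) ^ l) := by
    have hsum : ((S - μ • 1) ^ l) (f (a + ((T - μ • 1) ^ l) c)) = 0 :=
      Module.End.pow_map_zero_of_le hkl hk
    rwa [map_add, map_add, ← intertwine_sub_smul_pow hf, LinearMap.mem_ker.mp ha, map_zero,
      zero_add] at hsum
  have hzero := Submodule.disjoint_def.mp hS _ hker ⟨f c, (intertwine_sub_smul_pow hf μ l c).symm⟩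
  rw [map_add, hzero, add_zero]

theorem maxGenEigenspace_le_span [IsDomain R] [IsTorsionFree R M] {ι : Type*} {T : End R M}
    {v : ι → M} {w : ι → R} (hv : ∀ i, v i ∈ T.maxGenEigenspace (w i))
    (hspan : Submodule.span R (Set.range v) = ⊤) (μ : R) :
    T.maxGenEigenspace μ ≤ Submodule.span R (v '' {i | w i = μ}) := by
  intro x hx
  let P := Submodule.span R (v '' {i | w i = μ})
  let Q := Submodule.span R (v '' {i | w i ≠ μ})
  have hP : P ≤ T.maxGenEigenspace μ :=
    Submodule.span_le.mpr (by rintro _ ⟨i, rfl, rfl⟩; exact hv i)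
  have hQ : Q ≤ ⨆ ν ≠ μ, T.maxGenEigenspace ν :=
    Submodule.span_le.mpr (by
      rintro _ ⟨i, hi, rfl⟩
      exact Submodule.mem_iSup_of_mem (w i) (Submodule.mem_iSup_of_mem hi (hv i)))
  have hPQ : x ∈ P ⊔ Q := by
    have huniv : {i | w i = μ} ∪ {i | w i ≠ μ} = Set.univ := Set.union_compl_self _
    rw [← Submodule.span_union, ← Set.image_union, huniv, Set.image_univ, hspan]
    trivial
  obtain ⟨p, hp, q, hq, rfl⟩ := Submodule.mem_sup.mp hPQ
  have hqμ : q ∈ T.maxGenEigenspace μ := (Submodule.add_mem_iff_right _ (hP hp)).mp hx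
  rwa [Submodule.disjoint_def.mp (T.independent_maxGenEigenspace μ) q hqμ (hQ hq), add_zero]

end GeneralizedEigenspaces

section DerivationsModIdeal

variable {K R : Type*} [CommRing K] [CommRing R] [Algebra K R] {D : Derivation K R R}
  {I J : Ideal R}

theorem derivation_mem_pow (hI : ∀ f ∈ I, D f ∈ I) (k : ℕ) : ∀ f ∈ I ^ k, D f ∈ I ^ k := by
  induction k with
  | zero => simp
  | succ k ih =>
    intro f hf
    rw [pow_succ] at hf ⊢
    induction hf using Submodule.mul_induction_on' with
    | mem_mul_mem a ha b hb =>
      rw [D.leibniz, smul_eq_mul, smul_eq_mul, mul_comm b]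
      exact add_mem (Ideal.mul_mem_mul ha (hI b hb)) (Ideal.mul_mem_mul (ih a ha) hb)
    | add a _ b _ ha hb => rw [map_add]; exact add_mem ha hb

theorem derivation_mem_pow_of_mem_pow_succ (D : Derivation K R R) (k : ℕ) :
    ∀ f ∈ I ^ (k + 1), D f ∈ I ^ k := by
  induction k with
  | zero => simp
  | succ k ih =>
    intro f hf
    rw [pow_succ _ (k + 1)] at hf
    induction hf using Submodule.mul_induction_on' with
    | mem_mul_mem a ha b hb =>
      rw [D.leibniz, smul_eq_mul, smul_eq_mul, mul_comm b]
      exact add_mem (Ideal.mul_mem_right _ _ ha) (pow_succ I k ▸ Ideal.mul_mem_mul (ih a ha) hb)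
    | add a _ b _ ha hb => rw [map_add]; exact add_mem ha hb

theorem sub_smul_one_pow_mem {T : Module.End K R} (hJ : ∀ f ∈ J, T f ∈ J) (μ : K) (N : ℕ) :
    ∀ f ∈ J, ((T - μ • (1 : End K R)) ^ N) f ∈ J := by
  intro f hf
  induction N with
  | zero => exact hf
  | succ N ih =>
    rw [pow_succ', Module.End.mul_apply]
    exact sub_mem (hJ _ ih) (J.smul_of_tower_mem μ ih)

theorem sub_smul_one_pow_mul_mem (hJ : ∀ f ∈ J, D f ∈ J) {lam μ : K} {a b : ℕ} {f g : R}
    (hf : (((D : End K R) - lam • (1 : End K R)) ^ a) f ∈ J)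
    (hg : (((D : End K R) - μ • (1 : End K R)) ^ b) g ∈ J) :
    (((D : End K R) - (lam + μ) • (1 : End K R)) ^ (a + b)) (f * g) ∈ J := by
  have hleibniz (f g : R) : ((D : End K R) - (lam + μ) • (1 : End K R)) (f * g) =
      ((D : End K R) - lam • (1 : End K R)) f * g +
        f * ((D : End K R) - μ • (1 : End K R)) g := by
    simp only [LinearMap.sub_apply, LinearMap.smul_apply, LinearMap.add_apply, End.one_apply,
      Derivation.coeFn_coe, D.leibniz, smul_eq_mul, add_smul, sub_mul, mul_sub, smul_mul_assoc,
      mul_smul_comm]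
    ring
  induction h : a + b generalizing a b f g with
  | zero =>
    obtain ⟨rfl, rfl⟩ := Nat.add_eq_zero_iff.mp h
    exact J.mul_mem_right g hf
  | succ n ih =>
    rcases a with _ | a
    · exact sub_smul_one_pow_mem hJ _ _ _ (J.mul_mem_right g hf)
    rcases b with _ | b
    · exact sub_smul_one_pow_mem hJ _ _ _ (J.mul_mem_left f hg)
    rw [pow_succ, End.mul_apply, hleibniz, map_add]
    refine add_mem (ih (a := a) (b := b + 1) ?_ hg (by lia))
      (ih (a := a + 1) (b := b) hf ?_ (by lia))
    · rwa [pow_succ, End.mul_apply] at hf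
    · rwa [pow_succ, End.mul_apply] at hg

/-- `f` is a generalized eigenvector of the derivation `D` modulo `J`, with eigenvalue `μ`. An
element for which this holds modulo every power `I ^ k` is a generalized eigenvector in the
`I`-adic sense, where no single exponent `N` need serve all `k`. -/
def IsGenEigenvectorMod (D : Derivation K R R) (J : Ideal R) (μ : K) (f : R) : Prop :=
  ∃ N : ℕ, (((D : End K R) - μ • (1 : End K R)) ^ N) f ∈ J

namespace IsGenEigenvectorMod

theorem iff_mkQ_mem_maxGenEigenspace
    (hJ : J.restrictScalars K ≤ (J.restrictScalars K).comap (D : End K R)) {μ : K} {f : R} :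
    IsGenEigenvectorMod D J μ f ↔ (J.restrictScalars K).mkQ f ∈
      End.maxGenEigenspace ((J.restrictScalars K).mapQ _ (D : End K R) hJ) μ := by
  rw [End.mem_maxGenEigenspace]
  refine exists_congr fun N => ?_
  rw [← intertwine_sub_smul_pow ((Submodule.mapQ_mkQ _ _ _).symm), Submodule.mkQ_apply,
    Submodule.Quotient.mk_eq_zero, Submodule.restrictScalars_mem]

theorem congr (hJ : ∀ f ∈ J, D f ∈ J) {μ : K} {f g : R} (hf : IsGenEigenvectorMod D J μ f)
    (hfg : g - f ∈ J) : IsGenEigenvectorMod D J μ g := by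
  obtain ⟨N, hN⟩ := hf
  refine ⟨N, ?_⟩
  rw [← sub_add_cancel g f, map_add]
  exact add_mem (sub_smul_one_pow_mem (T := (D : End K R)) hJ μ N _ hfg) hN

theorem apply (hJ : ∀ f ∈ J, D f ∈ J) {μ : K} {f : R} (hf : IsGenEigenvectorMod D J μ f) :
    IsGenEigenvectorMod D J μ (D f) := by
  obtain ⟨N, hN⟩ := hf
  refine ⟨N, ?_⟩
  have hcomm : Commute (((D : End K R) - μ • (1 : End K R)) ^ N) (D : End K R) :=
    ((Commute.refl _).sub_left ((Commute.one_left _).smul_left μ)).pow_left N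
  have hcomm_apply := LinearMap.congr_fun hcomm.eq f
  simp only [Module.End.mul_apply, Derivation.coeFn_coe] at hcomm_apply
  exact hcomm_apply ▸ hJ _ hN

theorem one : IsGenEigenvectorMod D J 0 1 := ⟨1, by simp⟩

theorem mul (hJ : ∀ f ∈ J, D f ∈ J) {lam μ : K} {f g : R} (hf : IsGenEigenvectorMod D J lam f)
    (hg : IsGenEigenvectorMod D J μ g) : IsGenEigenvectorMod D J (lam + μ) (f * g) := by
  obtain ⟨a, ha⟩ := hf
  obtain ⟨b, hb⟩ := hg
  exact ⟨a + b, sub_smul_one_pow_mul_mem hJ ha hb⟩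

theorem pow (hJ : ∀ f ∈ J, D f ∈ J) {μ : K} {f : R} (hf : IsGenEigenvectorMod D J μ f) (n : ℕ) :
    IsGenEigenvectorMod D J (n • μ) (f ^ n) := by
  induction n with
  | zero => simpa using one
  | succ n ih => rw [succ_nsmul, pow_succ]; exact ih.mul hJ hf

theorem prod (hJ : ∀ f ∈ J, D f ∈ J) {ι : Type*} {s : Finset ι} {μ : ι → K} {f : ι → R}
    (hf : ∀ i ∈ s, IsGenEigenvectorMod D J (μ i) (f i)) :
    IsGenEigenvectorMod D J (∑ i ∈ s, μ i) (∏ i ∈ s, f i) := by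
  induction s using Finset.cons_induction with
  | empty => simpa using one
  | cons i s hi ih =>
    rw [Finset.sum_cons, Finset.prod_cons]
    exact (hf i (s.mem_cons_self i)).mul hJ (ih fun j hj => hf j (Finset.mem_cons_of_mem hj))

theorem conj {D' : Derivation K R R} {e : R →ₐ[K] R} (he : ∀ f, e (D' f) = D (e f)) {μ : K}
    {f : R} (hf : IsGenEigenvectorMod D J μ (e f)) :
    IsGenEigenvectorMod D' (J.comap e) μ f := by
  obtain ⟨N, hN⟩ := hf
  refine ⟨N, ?_⟩
  rwa [Ideal.mem_comap, ← AlgHom.toLinearMap_apply,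
    intertwine_sub_smul_pow (S := (D : End K R)) (LinearMap.ext he)]

theorem exists_lift {J' : Ideal R}
    [IsArtinian K (R ⧸ J'.restrictScalars K)] [IsNoetherian K (R ⧸ J.restrictScalars K)]
    (hJ : ∀ f ∈ J, D f ∈ J) (hJ' : ∀ f ∈ J', D f ∈ J') (hle : J' ≤ J) {μ : K} {v : R}
    (hv : IsGenEigenvectorMod D J μ v) :
    ∃ v', IsGenEigenvectorMod D J' μ v' ∧ v' - v ∈ J := by
  let p := J.restrictScalars K
  let p' := J'.restrictScalars K
  have hp : p ≤ p.comap (D : End K R) := hJ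
  have hp' : p' ≤ p'.comap (D : End K R) := hJ'
  have hle' : p' ≤ p := hle
  have hcomm :
      Submodule.factor hle' ∘ₗ p'.mapQ p' D hp' = p.mapQ p D hp ∘ₗ Submodule.factor hle' :=
    Submodule.linearMap_qext _ rfl
  obtain ⟨x, hx, hxv⟩ := exists_mem_maxGenEigenspace_of_surjective
    (Submodule.factor_surjective hle') hcomm ((iff_mkQ_mem_maxGenEigenspace hp).mp hv)
  obtain ⟨v', rfl⟩ := p'.mkQ_surjective x
  exact ⟨v', (iff_mkQ_mem_maxGenEigenspace hp').mpr hx, (Submodule.Quotient.eq p).mp hxv⟩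

end IsGenEigenvectorMod

theorem exists_limit_of_sub_mem_pow [IsPrecomplete I R] {k : ℕ} {u : ℕ → R}
    (hu : ∀ j, u (j + 1) - u j ∈ I ^ (k + j)) : ∃ L, ∀ j, L - u j ∈ I ^ (k + j) := by
  have hcauchy {i j : ℕ} (hij : i ≤ j) : u j - u i ∈ I ^ (k + i) := by
    induction j, hij using Nat.le_induction with
    | base => simp
    | succ j hij ih =>
      rw [← sub_add_sub_cancel _ (u j)]
      exact add_mem (Ideal.pow_le_pow_right (by lia) (hu j)) ih
  obtain ⟨L, hL⟩ := IsPrecomplete.prec (I := I) inferInstance (f := u) (fun {i j} hij => by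
    rw [SModEq.comm, SModEq.sub_mem, smul_eq_mul, Ideal.mul_top]
    exact Ideal.pow_le_pow_right (by lia) (hcauchy hij))
  refine ⟨L, fun j => ?_⟩
  have hLj := hL (k + j)
  rw [SModEq.comm, SModEq.sub_mem, smul_eq_mul, Ideal.mul_top] at hLj
  rw [← sub_add_sub_cancel _ (u (k + j))]
  exact add_mem hLj (hcauchy (by lia))

theorem IsGenEigenvectorMod.exists_adic_lift [IsPrecomplete I R]
    [∀ k, IsArtinian K (R ⧸ (I ^ k).restrictScalars K)]
    [∀ k, IsNoetherian K (R ⧸ (I ^ k).restrictScalars K)] (hI : ∀ f ∈ I, D f ∈ I) {μ : K}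
    {k : ℕ} {v : R} (hv : IsGenEigenvectorMod D (I ^ k) μ v) :
    ∃ y, (∀ l, IsGenEigenvectorMod D (I ^ l) μ y) ∧ y - v ∈ I ^ k := by
  have hstep (j : ℕ) (u : R) (hu : IsGenEigenvectorMod D (I ^ (k + j)) μ u) :
      ∃ u', IsGenEigenvectorMod D (I ^ (k + (j + 1))) μ u' ∧ u' - u ∈ I ^ (k + j) :=
    hu.exists_lift (derivation_mem_pow hI _) (derivation_mem_pow hI _)
      (Ideal.pow_le_pow_right (by lia))
  choose! next hnext hsub using hstep
  let u (j : ℕ) : R := Nat.rec v next j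
  have hu (j : ℕ) : IsGenEigenvectorMod D (I ^ (k + j)) μ (u j) := by
    induction j with
    | zero => exact hv
    | succ j ih => exact hnext j _ ih
  obtain ⟨y, hy⟩ := exists_limit_of_sub_mem_pow (u := u) fun j => hsub j _ (hu j)
  refine ⟨y, fun l => ?_, hy 0⟩
  obtain ⟨N, hN⟩ := (hu l).congr (derivation_mem_pow hI _) (hy l)
  exact ⟨N, Ideal.pow_le_pow_right (by lia) hN⟩

end DerivationsModIdeal

section VariableIdeal

variable {σ K : Type*} [CommRing K]

/-- The ideal generated by the variables: the power series with zero constant coefficient (see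
`mem_varIdeal_iff`), hence the maximal ideal when `K` is a field. -/
abbrev varIdeal (σ K : Type*) [CommRing K] : Ideal (MvPowerSeries σ K) :=
  Ideal.span (Set.range X)

theorem restrictScalars_varIdeal_pow (k : ℕ) :
    (varIdeal σ K ^ k).restrictScalars (MvPolynomial σ K) =
      MvPolynomial.idealOfVars σ K ^ k • ⊤ := by
  have hX : (MvPolynomial.idealOfVars σ K).map (algebraMap _ (MvPowerSeries σ K)) =
      varIdeal σ K := by
    rw [MvPolynomial.idealOfVars, Ideal.map_span, ← Set.range_comp]
    congr 2
    ext1 i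
    exact MvPolynomial.coe_X i
  rw [Ideal.smul_top_eq_map, Ideal.map_pow, hX]

variable [Finite σ]

theorem mem_varIdeal_pow_iff {k : ℕ} {f : MvPowerSeries σ K} :
    f ∈ varIdeal σ K ^ k ↔ ∀ m : σ →₀ ℕ, m.degree < k → coeff m f = 0 := by
  let J := MvPolynomial.idealOfVars σ K
  let e := (toAdicCompletionAlgEquiv σ K).toLinearEquiv
  have hmap : (J ^ k • ⊤ : Submodule _ (MvPowerSeries σ K)).map e.toLinearMap =
      (AdicCompletion.eval J _ k).ker := by
    rw [Submodule.map_smul'', Submodule.map_top, LinearEquiv.range,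
      AdicCompletion.pow_smul_top_eq_ker_eval (MvPolynomial.idealOfVars_fg σ K)]
  have heval : AdicCompletion.eval J _ k (e f) = Ideal.Quotient.mk _ (truncTotal k f) :=
    toAdicCompletion_apply_eq_mk_truncTotal
  rw [← Submodule.restrictScalars_mem (MvPolynomial σ K), restrictScalars_varIdeal_pow,
    ← SetLike.mem_coe, ← e.injective.mem_set_image, ← LinearEquiv.coe_toLinearMap,
    ← Submodule.map_coe, hmap, SetLike.mem_coe, LinearMap.mem_ker, LinearEquiv.coe_toLinearMap,
    heval, Ideal.Quotient.eq_zero_iff_mem, smul_eq_mul, Ideal.mul_top,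
    MvPolynomial.mem_pow_idealOfVars_iff']
  exact forall₂_congr fun m hm => by rw [coeff_truncTotal f hm]

theorem mem_varIdeal_iff {f : MvPowerSeries σ K} : f ∈ varIdeal σ K ↔ constantCoeff f = 0 := by
  rw [← pow_one (varIdeal σ K), mem_varIdeal_pow_iff]
  simp [Finsupp.degree_eq_zero_iff]

theorem eq_of_forall_sub_mem_varIdeal_pow {f g : MvPowerSeries σ K}
    (h : ∀ k, f - g ∈ varIdeal σ K ^ k) : f = g := by
  ext m
  rw [← sub_eq_zero, ← map_sub]
  exact mem_varIdeal_pow_iff.mp (h (m.degree + 1)) m m.degree.lt_succ_self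

theorem sub_truncTotal_mem_varIdeal_pow (k : ℕ) (f : MvPowerSeries σ K) :
    f - (truncTotal k f : MvPolynomial σ K) ∈ varIdeal σ K ^ k :=
  mem_varIdeal_pow_iff.mpr fun m hm => by
    rw [map_sub, MvPolynomial.coeff_coe, coeff_truncTotal f hm, sub_self]

theorem span_mkQ_monomial_eq_top (k : ℕ) :
    Submodule.span K (Set.range fun m : {m : σ →₀ ℕ // m.degree < k} =>
      ((varIdeal σ K ^ k).restrictScalars K).mkQ (monomial m 1)) = ⊤ := by
  refine eq_top_iff.mpr fun x _ => ?_
  obtain ⟨f, rfl⟩ := Submodule.mkQ_surjective _ x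
  let p := truncTotal k f
  have hf : ((varIdeal σ K ^ k).restrictScalars K).mkQ f =
      ((varIdeal σ K ^ k).restrictScalars K).mkQ (p : MvPolynomial σ K) :=
    (Submodule.Quotient.eq _).mpr (sub_truncTotal_mem_varIdeal_pow k f)
  have hp : (p : MvPowerSeries σ K) = ∑ m ∈ p.support, p.coeff m • monomial m (1 : K) := by
    conv_lhs => rw [p.as_sum, ← MvPolynomial.coeToMvPowerSeries.ringHom_apply, map_sum]
    simp [MvPolynomial.coe_monomial, ← map_smul]
  rw [hf, hp, map_sum]
  refine Submodule.sum_mem _ fun m hm => ?_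
  rw [map_smul]
  have hmk : m.degree < k := by
    by_contra! h
    exact MvPolynomial.mem_support_iff.mp hm (coeff_truncTotal_eq_zero f h)
  exact Submodule.smul_mem _ _ (Submodule.subset_span ⟨⟨m, hmk⟩, rfl⟩)

instance finite_quotient_varIdeal_pow (k : ℕ) :
    Module.Finite K (MvPowerSeries σ K ⧸ (varIdeal σ K ^ k).restrictScalars K) :=
  have : Finite {m : σ →₀ ℕ // m.degree < k} := (Finsupp.finite_of_degree_lt k).to_subtype
  ⟨span_mkQ_monomial_eq_top (K := K) (σ := σ) k ▸ Submodule.fg_span (Set.finite_range _)⟩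

theorem mvPowerSeries_derivation_ext {D D' : Derivation K (MvPowerSeries σ K) (MvPowerSeries σ K)}
    (h : ∀ i, D (X i) = D' (X i)) : D = D' := by
  have hpoly (p : MvPolynomial σ K) : (D - D') (p : MvPowerSeries σ K) = 0 := by
    induction p using MvPolynomial.induction_on with
    | C a => rw [MvPolynomial.coe_C]; exact (D - D').map_algebraMap a
    | add p q hp hq => rw [MvPolynomial.coe_add, map_add, hp, hq, add_zero]
    | mul_X p i hp => simp [hp, h]
  -- A derivation lowers the order by at most one, so the higher order tail of `f` is negligible.
  ext1 f
  refine eq_of_forall_sub_mem_varIdeal_pow fun k => ?_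
  have hmem := derivation_mem_pow_of_mem_pow_succ (D - D') k _
    (sub_truncTotal_mem_varIdeal_pow (k + 1) f)
  rwa [map_sub, hpoly, sub_zero] at hmem

theorem derivation_mem_varIdeal {D : Derivation K (MvPowerSeries σ K) (MvPowerSeries σ K)}
    (hD : ∀ i, constantCoeff (D (X i)) = 0) : ∀ f ∈ varIdeal σ K, D f ∈ varIdeal σ K := by
  intro f hf
  induction hf using Submodule.span_induction with
  | mem f hf => obtain ⟨i, rfl⟩ := hf; exact mem_varIdeal_iff.mpr (hD i)
  | zero => simp
  | add f g _ _ hf hg => rw [map_add]; exact add_mem hf hg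
  | smul a f hf' hf =>
    rw [smul_eq_mul, D.leibniz]
    exact add_mem (Ideal.mul_mem_left _ _ hf) (Ideal.mul_mem_right _ _ hf')

end VariableIdeal

section LinearPart

variable {σ K : Type*} [CommRing K]

/-- The coefficients of the terms of degree one of a power series. -/
def linearCoeff : MvPowerSeries σ K →ₗ[K] σ → K :=
  LinearMap.pi fun i => coeff (Finsupp.single i 1)

theorem linearCoeff_apply (f : MvPowerSeries σ K) (i : σ) :
    linearCoeff f i = coeff (Finsupp.single i 1) f := rfl

theorem linearCoeff_X [DecidableEq σ] (i : σ) :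
    linearCoeff (X i : MvPowerSeries σ K) = Pi.single i 1 := by
  ext j
  simp [linearCoeff_apply, coeff_X, Pi.single_apply, Finsupp.single_left_inj]

theorem mem_varIdeal_sq_iff [Finite σ] {f : MvPowerSeries σ K} :
    f ∈ varIdeal σ K ^ 2 ↔ constantCoeff f = 0 ∧ linearCoeff f = 0 := by
  rw [mem_varIdeal_pow_iff]
  refine ⟨fun h => ⟨h 0 (by simp), funext fun i => h _ (by simp)⟩, fun ⟨h0, h1⟩ m hm => ?_⟩
  rcases Nat.lt_succ_iff_lt_or_eq.mp hm with hm | hm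
  · rwa [(Finsupp.degree_eq_zero_iff m).mp (Nat.lt_one_iff.mp hm)]
  · obtain ⟨i, rfl⟩ := (Finsupp.sum_eq_one_iff m).mp hm
    exact congrFun h1 i

variable [Fintype σ]

/-- The homogeneous linear power series `∑ i, c i • X i` with coefficients `c`. -/
def linearForm : (σ → K) →ₗ[K] MvPowerSeries σ K := Fintype.linearCombination K X

theorem linearForm_apply (c : σ → K) : linearForm c = ∑ i, c i • (X i : MvPowerSeries σ K) := rfl

theorem constantCoeff_linearForm (c : σ → K) : constantCoeff (linearForm c) = 0 := by
  simp [linearForm_apply, smul_eq_C_mul]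

theorem linearCoeff_linearForm (c : σ → K) : linearCoeff (linearForm c) = c := by
  classical
  ext j
  simp [linearForm_apply, linearCoeff_X, Pi.single_apply]

variable [DecidableEq σ]

theorem linearForm_single_one (i : σ) : linearForm (Pi.single i 1) = (X i : MvPowerSeries σ K) := by
  simp [linearForm]

/-- The matrix of the linear part of a derivation: its columns are the linear coefficients of the
images of the variables. -/
def linearPart (D : Derivation K (MvPowerSeries σ K) (MvPowerSeries σ K)) :
    Matrix σ σ K :=
  Matrix.of fun i j => linearCoeff (D (X j)) i

variable {D : Derivation K (MvPowerSeries σ K) (MvPowerSeries σ K)}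

theorem linearCoeff_derivation (hD : ∀ i, constantCoeff (D (X i)) = 0) :
    linearCoeff ∘ₗ (D : End K (MvPowerSeries σ K)) = (linearPart D).toLin' ∘ₗ linearCoeff := by
  ext1 f
  have hf : D (f - algebraMap K _ (constantCoeff f) - linearForm (linearCoeff f)) ∈
      varIdeal σ K ^ 2 := by
    refine derivation_mem_pow (derivation_mem_varIdeal hD) 2 _ (mem_varIdeal_sq_iff.mpr ⟨?_, ?_⟩)
    · simp [MvPowerSeries.algebraMap_apply, constantCoeff_linearForm]
    · ext i
      rw [map_sub, map_sub, linearCoeff_linearForm, sub_right_comm, sub_self, zero_sub]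
      simp [linearCoeff_apply, MvPowerSeries.algebraMap_apply, coeff_C]
  rw [map_sub, map_sub, D.map_algebraMap, sub_zero] at hf
  have hlin := (mem_varIdeal_sq_iff.mp hf).2
  rw [map_sub, sub_eq_zero] at hlin
  rw [LinearMap.comp_apply, Derivation.coeFn_coe, hlin]
  ext i
  simp [linearForm_apply, linearPart, Matrix.mulVec, dotProduct, mul_comm]

theorem isGenEigenvectorMod_varIdeal_sq_iff (hD : ∀ i, constantCoeff (D (X i)) = 0) {μ : K}
    {f : MvPowerSeries σ K} (hf : constantCoeff f = 0) :
    IsGenEigenvectorMod D (varIdeal σ K ^ 2) μ f ↔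
      linearCoeff f ∈ End.maxGenEigenspace (linearPart D).toLin' μ := by
  rw [End.mem_maxGenEigenspace]
  refine exists_congr fun N => ?_
  have hN := sub_smul_one_pow_mem (T := (D : End K _)) (derivation_mem_varIdeal hD) μ N f
    (mem_varIdeal_iff.mpr hf)
  rw [mem_varIdeal_sq_iff, ← intertwine_sub_smul_pow (linearCoeff_derivation hD),
    and_iff_right (mem_varIdeal_iff.mp hN)]

end LinearPart

section Automorphisms

variable {σ K : Type*} [CommRing K]

theorem bijective_of_map_varIdeal_eq [Finite σ]
    {ψ : MvPowerSeries σ K →ₐ[K] MvPowerSeries σ K}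
    (hψ : (varIdeal σ K).map ψ = varIdeal σ K) : Function.Bijective ψ := by
  have hsurj : Function.Surjective ψ := by
    have hψ' : (varIdeal σ K).map ψ.toRingHom = varIdeal σ K := hψ
    have : IsHausdorff ((varIdeal σ K).map ψ.toRingHom)
      (MvPowerSeries σ K) := by rw [hψ']; infer_instance
    refine surjective_of_mk_map_comp_surjective (I := varIdeal σ K) ψ.toRingHom ?_
    intro x
    obtain ⟨f, rfl⟩ := Ideal.Quotient.mk_surjective x
    refine ⟨algebraMap K _ (constantCoeff f), (Ideal.Quotient.eq).mpr ?_⟩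
    have hconst (c : K) : ψ.toRingHom (algebraMap K _ c) = algebraMap K _ c := ψ.commutes c
    rw [hψ', mem_varIdeal_iff, hconst]
    simp [MvPowerSeries.algebraMap_apply]
  refine ⟨(injective_iff_map_eq_zero ψ).mpr fun f hf => ?_, hsurj⟩
  refine eq_of_forall_sub_mem_varIdeal_pow fun k => ?_
  let p := (varIdeal σ K ^ k).restrictScalars K
  have hp : p ≤ p.comap ψ.toLinearMap := fun g hg => by
    have hg' := Ideal.mem_map_of_mem ψ hg
    rwa [Ideal.map_pow, hψ] at hg'
  have hinj : Function.Injective (p.mapQ p ψ.toLinearMap hp) :=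
    OrzechProperty.injective_of_surjective_endomorphism _ (LinearMap.range_eq_top.mp (by
      rw [Submodule.range_mapQ, LinearMap.range_eq_top.mpr hsurj, Submodule.map_top,
        Submodule.range_mkQ]))
  exact (Submodule.Quotient.eq p).mp (@hinj (p.mkQ f) (p.mkQ 0) (by simp [hf]))

theorem comap_varIdeal_pow_eq {Ψ : MvPowerSeries σ K ≃ₐ[K] MvPowerSeries σ K}
    (hΨ : (varIdeal σ K).map Ψ = varIdeal σ K) (k : ℕ) :
    (varIdeal σ K ^ k).comap Ψ = varIdeal σ K ^ k := by
  conv_lhs => rw [← hΨ, ← Ideal.map_pow]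
  exact Ideal.comap_map_of_bijective Ψ Ψ.bijective

theorem map_varIdeal_eq_of_basis [Fintype σ]
    {ψ : MvPowerSeries σ K →ₐ[K] MvPowerSeries σ K} {b : Basis σ K (σ → K)}
    (hψ : ∀ i, ψ (X i) - linearForm (b i) ∈ varIdeal σ K ^ 2) :
    (varIdeal σ K).map ψ = varIdeal σ K := by
  classical
  have hX (i : σ) : ψ (X i) ∈ (varIdeal σ K).map ψ :=
    Ideal.mem_map_of_mem ψ (Ideal.subset_span ⟨i, rfl⟩)
  refine le_antisymm (Ideal.map_le_iff_le_comap.mpr (Ideal.span_le.mpr ?_)) ?_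
  · rintro _ ⟨i, rfl⟩
    have hmem := add_mem (Ideal.pow_le_self two_ne_zero (hψ i))
      (mem_varIdeal_iff.mpr (constantCoeff_linearForm (b i)))
    rwa [sub_add_cancel] at hmem
  refine Submodule.le_of_le_smul_of_le_jacobson_bot (I := varIdeal σ K)
    (Submodule.fg_span (Set.finite_range _)) (IsAdicComplete.le_jacobson_bot _) ?_
  have hb (i : σ) : linearForm (b i) ∈ (varIdeal σ K).map ψ ⊔ varIdeal σ K • varIdeal σ K := by
    rw [← sub_sub_cancel (ψ (X i)) (linearForm (b i)), smul_eq_mul, ← sq]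
    exact sub_mem (Ideal.mem_sup_left (hX i)) (Ideal.mem_sup_right (hψ i))
  refine Ideal.span_le.mpr ?_
  rintro _ ⟨i, rfl⟩
  rw [← linearForm_single_one, ← b.sum_repr (Pi.single i 1), map_sum]
  refine sum_mem fun j _ => ?_
  rw [map_smul]
  exact Submodule.smul_of_tower_mem _ _ (hb j)

theorem exists_algEquiv_X_eq [Fintype σ] {y : σ → MvPowerSeries σ K}
    {b : Basis σ K (σ → K)}
    (hy : ∀ i, y i - linearForm (b i) ∈ varIdeal σ K ^ 2) :
    ∃ Ψ : MvPowerSeries σ K ≃ₐ[K] MvPowerSeries σ K,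
      (varIdeal σ K).map Ψ = varIdeal σ K ∧ ∀ i, Ψ (X i) = y i := by
  have hy0 (i : σ) : constantCoeff (y i) = 0 := by
    simpa [constantCoeff_linearForm] using (mem_varIdeal_sq_iff.mp (hy i)).1
  have hsubst := hasSubst_of_constantCoeff_zero hy0
  have hX (i : σ) : substAlgHom (R := K) hsubst (X i) = y i := substAlgHom_X hsubst i
  have hmap := map_varIdeal_eq_of_basis (ψ := substAlgHom hsubst) (b := b) fun i => by
    rw [hX]; exact hy i
  exact ⟨AlgEquiv.ofBijective _ (bijective_of_map_varIdeal_eq hmap), hmap, hX⟩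

end Automorphisms

theorem derivation_sum_apply {K R ι : Type*} [CommRing K] [CommRing R] [Algebra K R] (s : Finset ι)
    (D : ι → Derivation K R R) (f : R) : (∑ i ∈ s, D i) f = ∑ i ∈ s, D i f := by
  rw [← Derivation.coeFnAddMonoidHom_apply, map_sum, Finset.sum_apply]
  rfl

theorem add_sub_smul_one_pow_apply_of_commute {R M : Type*} [CommRing R] [AddCommGroup M]
    [Module R M] {S T : End R M} (hST : Commute S T) {μ : R} {x : M} (hx : S x = μ • x) (k : ℕ) :
    ((S + T - μ • (1 : End R M)) ^ k) x = (T ^ k) x := by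
  induction k generalizing x with
  | zero => rfl
  | succ k ih =>
    have hTx : S (T x) = μ • T x := by
      rw [← map_smul, ← hx]
      exact LinearMap.congr_fun hST.eq x
    have hstep : (S + T - μ • (1 : End R M)) x = T x := by simp [hx]
    rw [pow_succ, End.mul_apply, hstep, ih hTx, pow_succ, End.mul_apply]

section EulerDerivation

variable {σ K : Type*}

theorem isGenEigenvectorMod_monomial [CommRing K] {w : σ → K}
    {D : Derivation K (MvPowerSeries σ K) (MvPowerSeries σ K)} {J : Ideal (MvPowerSeries σ K)}
    (hJ : ∀ f ∈ J, D f ∈ J)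
    (hX : ∀ i, IsGenEigenvectorMod D J (w i) (X i)) (m : σ →₀ ℕ) :
    IsGenEigenvectorMod D J (Finsupp.weight w m) (monomial m 1) := by
  classical
  rw [monomial_one_eq, Finsupp.weight_apply, Finsupp.prod, Finsupp.sum]
  exact IsGenEigenvectorMod.prod hJ fun i _ => (hX i).pow hJ _

theorem coeff_eq_zero_of_weight_ne [Field K] [Finite σ] {w : σ → K}
    {D : Derivation K (MvPowerSeries σ K) (MvPowerSeries σ K)} {k : ℕ}
    (hD : ∀ f ∈ varIdeal σ K ^ k, D f ∈ varIdeal σ K ^ k) {m : σ →₀ ℕ} (hmk : m.degree < k)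
    (hX : ∀ i, IsGenEigenvectorMod D (varIdeal σ K ^ k) (w i) (X i)) {μ : K}
    {f : MvPowerSeries σ K} (hf : IsGenEigenvectorMod D (varIdeal σ K ^ k) μ f)
    (hm : Finsupp.weight w m ≠ μ) : coeff m f = 0 := by
  classical
  let p := (varIdeal σ K ^ k).restrictScalars K
  let v (n : {n : σ →₀ ℕ // n.degree < k}) : MvPowerSeries σ K ⧸ p := p.mkQ (monomial n.1 1)
  have hp : p ≤ p.comap (D : End K (MvPowerSeries σ K)) := hD
  have hv (n) : v n ∈ End.maxGenEigenspace (p.mapQ p D hp) (Finsupp.weight w n.1) :=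
    (IsGenEigenvectorMod.iff_mkQ_mem_maxGenEigenspace hp).mp
      (isGenEigenvectorMod_monomial hD hX n.1)
  have hspan : p.mkQ f ∈ Submodule.span K (v '' {n | Finsupp.weight w n.1 = μ}) :=
    maxGenEigenspace_le_span hv (span_mkQ_monomial_eq_top k) μ
      ((IsGenEigenvectorMod.iff_mkQ_mem_maxGenEigenspace hp).mp hf)
  have hle : p ≤ (coeff m : MvPowerSeries σ K →ₗ[K] K).ker := fun g hg =>
    mem_varIdeal_pow_iff.mp hg m hmk
  have hker : Submodule.span K (v '' {n | Finsupp.weight w n.1 = μ}) ≤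
      (p.liftQ (coeff m) hle).ker := by
    refine Submodule.span_le.mpr ?_
    rintro _ ⟨n, hn, rfl⟩
    have hne : m ≠ n.1 := by rintro rfl; exact hm hn
    simp [v, coeff_monomial, hne]
  exact hker hspan

variable [Fintype σ]

/-- The Euler derivation `∑ i, w i • X i • ∂/∂X i`, which multiplies the monomial `X ^ m` by its
weight `∑ i, m i • w i`. -/
def eulerDerivation [CommRing K] (w : σ → K) :
    Derivation K (MvPowerSeries σ K) (MvPowerSeries σ K) :=
  ∑ i, (w i • X i : MvPowerSeries σ K) • pderiv K i

theorem eulerDerivation_apply [CommRing K] (w : σ → K) (f : MvPowerSeries σ K) :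
    eulerDerivation w f = ∑ i, w i • (X i * pderiv K i f) := by
  simp [eulerDerivation, derivation_sum_apply]

theorem eulerDerivation_X [CommRing K] (w : σ → K) (i : σ) :
    eulerDerivation w (X i) = w i • (X i : MvPowerSeries σ K) := by
  classical
  simp [eulerDerivation_apply, pderiv_X, Pi.single_apply]

theorem coeff_eulerDerivation [CommRing K] (w : σ → K) (m : σ →₀ ℕ) (f : MvPowerSeries σ K) :
    coeff m (eulerDerivation w f) = Finsupp.weight w m * coeff m f := by
  classical
  have hcoeff (i : σ) : coeff m (X i * pderiv K i f) = m i * coeff m f := by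
    rw [X_def, coeff_monomial_mul, coeff_pderiv, one_mul]
    split_ifs with hi
    · rw [tsub_add_cancel_of_le hi, Finsupp.tsub_apply, Finsupp.single_eq_same,
        ← Nat.cast_add_one, Nat.sub_add_cancel (Finsupp.single_le_iff.mp hi), mul_comm]
    · rw [Finsupp.single_le_iff, not_le, Nat.lt_one_iff] at hi
      rw [hi, Nat.cast_zero, zero_mul]
  simp [eulerDerivation_apply, map_sum, hcoeff, Finsupp.weight_eq_sum, Finset.sum_mul, mul_assoc,
    mul_left_comm]

theorem isNilpotent_linearPart_of_commute [CommRing K] [DecidableEq σ] {w : σ → K}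
    {N : Derivation K (MvPowerSeries σ K) (MvPowerSeries σ K)}
    (hN : ∀ i, constantCoeff (N (X i)) = 0) (hcomm : ⁅eulerDerivation w, N⁆ = 0)
    (hX : ∀ i, IsGenEigenvectorMod (eulerDerivation w + N) (varIdeal σ K ^ 2) (w i) (X i)) :
    IsNilpotent (linearPart N) := by
  have hcomm' : Commute (eulerDerivation w : End K (MvPowerSeries σ K)) N := by
    rw [commute_iff_lie_eq, ← Derivation.commutator_coe_linear_map, hcomm]
    rfl
  have hmem (i : σ) : Pi.single i 1 ∈ End.maxGenEigenspace (linearPart N).toLin' 0 := by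
    rw [← linearCoeff_X, ← isGenEigenvectorMod_varIdeal_sq_iff hN (constantCoeff_X i)]
    obtain ⟨k, hk⟩ := hX i
    refine ⟨k, ?_⟩
    rwa [Derivation.coe_add_linearMap,
      add_sub_smul_one_pow_apply_of_commute hcomm' (eulerDerivation_X w i),
      ← sub_zero (N : End K (MvPowerSeries σ K)),
      ← zero_smul K (1 : End K (MvPowerSeries σ K))] at hk
  have htop : End.maxGenEigenspace (linearPart N).toLin' 0 = ⊤ := by
    rw [eq_top_iff, ← (Pi.basisFun K σ).span_eq, Submodule.span_le]
    rintro _ ⟨i, rfl⟩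
    rw [Pi.basisFun_apply]
    exact hmem i
  rw [← Matrix.isNilpotent_toLin'_iff, End.isNilpotent_iff_of_finite]
  intro c
  have hc : c ∈ End.maxGenEigenspace (linearPart N).toLin' 0 := htop ▸ Submodule.mem_top
  simpa [End.mem_maxGenEigenspace] using hc

theorem eulerDerivation_eq_smul [Field K] {w : σ → K}
    {D : Derivation K (MvPowerSeries σ K) (MvPowerSeries σ K)}
    (hD : ∀ i, constantCoeff (D (X i)) = 0)
    (hX : ∀ k i, IsGenEigenvectorMod D (varIdeal σ K ^ k) (w i) (X i)) {μ : K}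
    {f : MvPowerSeries σ K} (hf : ∀ k, IsGenEigenvectorMod D (varIdeal σ K ^ k) μ f) :
    eulerDerivation w f = μ • f := by
  ext m
  rw [coeff_eulerDerivation, coeff_smul]
  by_cases hm : Finsupp.weight w m = μ
  · rw [hm]
  · have hlt := m.degree.lt_succ_self
    rw [coeff_eq_zero_of_weight_ne (derivation_mem_pow (derivation_mem_varIdeal hD) _) hlt (hX _)
      (hf _) hm, mul_zero, mul_zero]

end EulerDerivation

section NormalForm

variable {σ K : Type*} [Fintype σ] [Field K] {w : σ → K}
  {D : Derivation K (MvPowerSeries σ K) (MvPowerSeries σ K)}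

theorem eulerDerivation_lie_eq_zero (hD : ∀ i, constantCoeff (D (X i)) = 0)
    (hX : ∀ k i, IsGenEigenvectorMod D (varIdeal σ K ^ k) (w i) (X i)) :
    ⁅eulerDerivation w, D⁆ = 0 := by
  refine mvPowerSeries_derivation_ext fun i => ?_
  have hDX : eulerDerivation w (D (X i)) = w i • D (X i) :=
    eulerDerivation_eq_smul hD hX fun k =>
      (hX k i).apply (derivation_mem_pow (derivation_mem_varIdeal hD) k)
  rw [Derivation.commutator_apply, hDX, eulerDerivation_X, D.map_smul, sub_self,
    Derivation.zero_apply]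

variable [DecidableEq σ]

theorem exists_adic_genEigenvector_coordinates (hD : ∀ i, constantCoeff (D (X i)) = 0)
    (hw : (linearPart D).charpoly = ∏ i, (Polynomial.X - Polynomial.C (w i))) :
    ∃ (b : Basis σ K (σ → K)) (y : σ → MvPowerSeries σ K),
      (∀ i, y i - linearForm (b i) ∈ varIdeal σ K ^ 2) ∧
      ∀ i k, IsGenEigenvectorMod D (varIdeal σ K ^ k) (w i) (y i) := by
  obtain ⟨b, hb⟩ := exists_basis_mem_maxGenEigenspace
    ((linearPart D).charpoly_toLin'.trans hw)
  have hlin (i : σ) : IsGenEigenvectorMod D (varIdeal σ K ^ 2) (w i) (linearForm (b i)) := by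
    rw [isGenEigenvectorMod_varIdeal_sq_iff hD (constantCoeff_linearForm _),
      linearCoeff_linearForm]
    exact hb i
  choose y hy hyb using fun i => (hlin i).exists_adic_lift (derivation_mem_varIdeal hD)
  exact ⟨b, y, hyb, hy⟩

theorem exists_conj_isGenEigenvectorMod_X (hD : ∀ i, constantCoeff (D (X i)) = 0)
    (hw : (linearPart D).charpoly = ∏ i, (Polynomial.X - Polynomial.C (w i))) :
    ∃ (Ψ : MvPowerSeries σ K ≃ₐ[K] MvPowerSeries σ K)
      (D' : Derivation K (MvPowerSeries σ K) (MvPowerSeries σ K)),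
      (∀ f, constantCoeff (Ψ f) = 0 ↔ constantCoeff f = 0) ∧ (∀ f, Ψ (D' f) = D (Ψ f)) ∧
      (∀ i, constantCoeff (D' (X i)) = 0) ∧
      ∀ k i, IsGenEigenvectorMod D' (varIdeal σ K ^ k) (w i) (X i) := by
  obtain ⟨b, y, hyb, hy⟩ := exists_adic_genEigenvector_coordinates hD hw
  obtain ⟨Ψ, hΨ, hΨX⟩ := exists_algEquiv_X_eq hyb
  have hcomap := comap_varIdeal_pow_eq hΨ
  have hΨ0 (f) : constantCoeff (Ψ f) = 0 ↔ constantCoeff f = 0 := by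
    rw [← mem_varIdeal_iff, ← mem_varIdeal_iff, ← pow_one (varIdeal σ K), ← Ideal.mem_comap,
      hcomap]
  let D' := Derivation.liftOfSurjective (d := D) Ψ.symm.surjective (by simp)
  have hD' (f) : Ψ (D' f) = D (Ψ f) := by
    have h := Derivation.liftOfSurjective_apply (d := D) Ψ.symm.surjective (by simp) (Ψ f)
    rw [Ψ.symm_apply_apply] at h
    rw [← Ψ.apply_symm_apply (D (Ψ f)), ← h]
  refine ⟨Ψ, D', hΨ0, hD', fun i => ?_, fun k i => ?_⟩
  · rw [← hΨ0, hD', ← mem_varIdeal_iff]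
    exact derivation_mem_varIdeal hD _ (mem_varIdeal_iff.mpr ((hΨ0 _).mpr (constantCoeff_X i)))
  · rw [← hcomap k]
    exact IsGenEigenvectorMod.conj (e := Ψ.toAlgHom) hD' ((hΨX i).symm ▸ hy i k)

theorem formal_poincare_dulac_general (hD : ∀ i, constantCoeff (D (X i)) = 0)
    (hw : (linearPart D).charpoly = ∏ i, (Polynomial.X - Polynomial.C (w i))) :
    ∃ Φ : MvPowerSeries σ K ≃ₐ[K] MvPowerSeries σ K,
      (∀ g, constantCoeff g = 0 → constantCoeff (Φ g) = 0) ∧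
      ∃ N : Derivation K (MvPowerSeries σ K) (MvPowerSeries σ K),
        (∀ i, constantCoeff (N (X i)) = 0) ∧
        IsNilpotent (linearPart N) ∧
        ⁅eulerDerivation w, N⁆ = 0 ∧
        ∀ g, Φ (D (Φ.symm g)) = eulerDerivation w g + N g := by
  obtain ⟨Ψ, D', hΨ0, hΨ, hD', hX⟩ := exists_conj_isGenEigenvectorMod_X hD hw
  have hN (i : σ) : constantCoeff ((D' - eulerDerivation w) (X i)) = 0 := by
    simp [hD', eulerDerivation_X, smul_eq_C_mul]
  have hcomm : ⁅eulerDerivation w, D' - eulerDerivation w⁆ = 0 := by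
    refine (lie_sub (eulerDerivation w) D' (eulerDerivation w)).trans ?_
    rw [lie_self, eulerDerivation_lie_eq_zero hD' hX, sub_zero]
  refine ⟨Ψ.symm, fun g hg => (hΨ0 _).mp (by rwa [Ψ.apply_symm_apply]), D' - eulerDerivation w, hN,
    isNilpotent_linearPart_of_commute hN hcomm ?_, hcomm, fun g => ?_⟩
  · rw [add_sub_cancel]
    exact hX 2
  · rw [Derivation.sub_apply, add_sub_cancel, AlgEquiv.symm_symm, ← hΨ, Ψ.symm_apply_apply]

end NormalForm

section Coefficients

theorem fpd_eq_pderiv {n : ℕ} (i : Fin n) (f : FPS n) : fpd i f = pderiv ℂ i f := by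
  ext m
  rw [coeff_pderiv, mul_comm]
  rfl

/-- The derivation of the power series ring with the given coefficients, so that `applyPS` is its
underlying function. -/
def derivationOfCoeffs {n : ℕ} (δ : Fin n → FPS n) : Derivation ℂ (FPS n) (FPS n) :=
  ∑ i, δ i • pderiv ℂ i

theorem derivationOfCoeffs_apply {n : ℕ} (δ : Fin n → FPS n) (f : FPS n) :
    derivationOfCoeffs δ f = applyPS δ f := by
  simp [derivationOfCoeffs, derivation_sum_apply, applyPS, fpd_eq_pderiv]

theorem derivationOfCoeffs_X {n : ℕ} (δ : Fin n → FPS n) (i : Fin n) :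
    derivationOfCoeffs δ (X i) = δ i := by
  simp [derivationOfCoeffs, derivation_sum_apply, pderiv_X, Pi.single_apply]

theorem derivation_eq_applyPS {n : ℕ} (D : Derivation ℂ (FPS n) (FPS n)) (f : FPS n) :
    D f = applyPS (fun i => D (X i)) f := by
  rw [← derivationOfCoeffs_apply,
    mvPowerSeries_derivation_ext (derivationOfCoeffs_X fun i => D (X i))]

theorem linearPart_derivationOfCoeffs {n : ℕ} (δ : Fin n → FPS n) :
    linearPart (derivationOfCoeffs δ) = linPartPS δ := by
  ext i j
  simp only [linearPart, derivationOfCoeffs_X, linearCoeff_apply, linPartPS]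

theorem eulerPS_eq_eulerDerivation_X {n : ℕ} (w : Fin n → ℂ) :
    eulerPS w = fun i => eulerDerivation w (X i) := by
  ext1 i
  rw [eulerDerivation_X, smul_eq_C_mul, eulerPS]

end Coefficients

/-- Theorem 3.1 (a), the formal Poincaré–Dulac normal form: if `δ` is a formal vector
field with `δ(0) = 0` whose linear part has eigenvalues `w`, then after a formal change
of coordinates (a `ℂ`-algebra automorphism of `Ô_n` preserving the maximal ideal),
`δ = δ_S + δ_N` where `δ_S = Σ wᵢ xᵢ ∂ᵢ` and `δ_N` has nilpotent linear part and
satisfies `[δ_S, δ_N] = 0`. -/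
theorem formal_poincare_dulac (n : ℕ) (δ : Fin n → FPS n) (hδ0 : VanishAt0 δ)
    (w : Fin n → ℂ)
    (hw : (linPartPS δ).charpoly = ∏ i, (Polynomial.X - Polynomial.C (w i))) :
    ∃ Φ : FPS n ≃ₐ[ℂ] FPS n,
      (∀ g : FPS n, MvPowerSeries.constantCoeff g = 0 →
        MvPowerSeries.constantCoeff (Φ g) = 0) ∧
      ∃ δN : Fin n → FPS n,
        VanishAt0 δN ∧
        IsNilpotent (linPartPS δN) ∧
        CommutePS (eulerPS w) δN ∧
        ∀ g : FPS n, Φ (applyPS δ (Φ.symm g)) =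
          applyPS (eulerPS w) g + applyPS δN g := by
  have h0 (i : Fin n) : constantCoeff (derivationOfCoeffs δ (X i)) = 0 := by
    rw [derivationOfCoeffs_X]
    exact hδ0 i
  rw [← linearPart_derivationOfCoeffs] at hw
  obtain ⟨Φ, hΦ, N, hN0, hN, hcomm, hsum⟩ := formal_poincare_dulac_general h0 hw
  refine ⟨Φ, hΦ, fun i => N (X i), hN0, hN, fun i => ?_, fun g => ?_⟩ <;>
    rw [eulerPS_eq_eulerDerivation_X, ← derivation_eq_applyPS, ← derivation_eq_applyPS]
  · rw [← sub_eq_zero, ← Derivation.commutator_apply, hcomm, Derivation.zero_apply]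
  · rw [← derivationOfCoeffs_apply, hsum]

end
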